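/- Let Q be a polyhedron in V, let F and F' be faces of Q, and let v, v' ∈ V. Then C_F(Q) + v tightly contains the polyhedron C_{F'}(Q) + v' if and only if C_F(Q) + v is an affine tangent cone of C_{F'}(Q) + v', i.e., there exist a face G of the polyhedron C_{F'}(Q) + v' and a point u ∈ G such that C_F(Q) + v = C_G(C_{F'}(Q)+v') + u. -/

import Mathlib

/-!
Write `A = C_F(Q)` and `B = C_{F'}(Q)`, and let `y` be a functional exposing `F`.

If `v + A` tightly contains `v' + B`, then `B ⊆ A` and `v' - v` lies in the lineality space of `A`,
so that `v + A = v' + A`. Since `y ≤ 0` on `A`, hence on `B`, every point of `F'` maximizes `y` on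
`Q`, so `F' ⊆ F`. The functional `y` then exposes the face `v' + {x ∈ B | ⟪y, x⟫ = 0}` of `v' + B`,
and the tangent cone there is `A`: an element of `B` orthogonal to `y` is a nonnegative combination
of differences `f - f'` with `f ∈ F`, `f' ∈ F'`, so its negative lies in `A`
(`tanCone_subset_neg_of_inner_eq_zero`), and conversely `q - f = (q - f') - (f - f')`.

For the other direction, if translates of two convex cones agree, then the difference of the two
apices is a lineality direction of both (`mem_lineal_of_transl_eq`).
-/

open RealInnerProductSpace

noncomputable def indic {V : Type*} (P : Set V) : V → ℤ := P.indicator 1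

noncomputable def iv (p : Prop) : ℤ := @ite _ p (Classical.propDecidable p) 1 0

def Valuative {V A : Type*} [AddCommGroup A] (Fam : Set (Set V)) (f : Set V → A) : Prop :=
  ∀ (k : ℕ) (a : Fin k → ℤ) (P : Fin k → Set V),
    (∀ i, P i ∈ Fam) → (∑ i, a i • indic (P i)) = 0 → (∑ i, a i • f (P i)) = 0

variable {V : Type*} [NormedAddCommGroup V] [InnerProductSpace ℝ V] [FiniteDimensional ℝ V]

def IsPolyhedron (P : Set V) : Prop :=
  P.Nonempty ∧ ∃ s : Finset (V × ℝ), P = {x | ∀ p ∈ s, ⟪p.1, x⟫ ≤ p.2}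

def IsFace (Q F : Set V) : Prop :=
  ∃ y : V, F.Nonempty ∧ F = {x | x ∈ Q ∧ ∀ q ∈ Q, ⟪y, q⟫ ≤ ⟪y, x⟫}

def IsConvexCone (C : Set V) : Prop :=
  (0 : V) ∈ C ∧ Convex ℝ C ∧ ∀ c : ℝ, 0 ≤ c → ∀ x ∈ C, c • x ∈ C

def coneGen (S : Set V) : Set V := ⋂₀ {C : Set V | IsConvexCone C ∧ S ⊆ C}

def tanCone (Q F : Set V) : Set V := coneGen {d | ∃ q ∈ Q, ∃ v ∈ F, d = q - v}

def normCone (Q F : Set V) : Set V := {y | ∀ v ∈ F, ∀ q ∈ Q, ⟪y, q⟫ ≤ ⟪y, v⟫}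

def IsExtDef (Q P : Set V) : Prop :=
  IsPolyhedron P ∧ ∀ F : Set V, IsFace P F → ∃ 𝒢 : Set (Set V),
    (∀ G ∈ 𝒢, IsFace Q G) ∧ normCone P F = ⋃ G ∈ 𝒢, normCone Q G

def lineal (C : Set V) : Set V := C ∩ (-C)

def transl (v : V) (C : Set V) : Set V := (fun x => v + x) '' C

def TightContains (C : Set V) (v : V) (P : Set V) : Prop :=
  P ⊆ transl v C ∧ (P ∩ transl v (lineal C)).Nonempty

theorem mem_transl {v x : V} {C : Set V} : x ∈ transl v C ↔ x - v ∈ C := by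
  constructor
  · rintro ⟨c, hc, rfl⟩
    simpa using hc
  · intro h
    exact ⟨x - v, h, by simp⟩

theorem IsConvexCone.add_mem {C : Set V} (hC : IsConvexCone C) {x y : V} (hx : x ∈ C)
    (hy : y ∈ C) : x + y ∈ C := by
  have h : (1 / 2 : ℝ) • x + (1 / 2 : ℝ) • y ∈ C :=
    hC.2.1 hx hy (by norm_num) (by norm_num) (by norm_num)
  have h2 := hC.2.2 2 (by norm_num) _ h
  rwa [smul_add, smul_smul, smul_smul, show (2 : ℝ) * (1 / 2) = 1 by norm_num, one_smul,
    one_smul] at h2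

theorem isConvexCone_of_add {C : Set V} (h0 : (0 : V) ∈ C)
    (hadd : ∀ x ∈ C, ∀ y ∈ C, x + y ∈ C) (hsmul : ∀ c : ℝ, 0 ≤ c → ∀ x ∈ C, c • x ∈ C) :
    IsConvexCone C :=
  ⟨h0, fun x hx y hy a b ha hb _ => hadd _ (hsmul a ha x hx) _ (hsmul b hb y hy), hsmul⟩

theorem isConvexCone_coneGen (S : Set V) : IsConvexCone (coneGen S) :=
  isConvexCone_of_add (fun _ hC => hC.1.1)
    (fun _ hx _ hy C hC => hC.1.add_mem (hx C hC) (hy C hC))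
    (fun c hc x hx C hC => hC.1.2.2 c hc x (hx C hC))

theorem isConvexCone_tanCone (Q F : Set V) : IsConvexCone (tanCone Q F) :=
  isConvexCone_coneGen _

theorem sub_mem_tanCone {Q F : Set V} {q f : V} (hq : q ∈ Q) (hf : f ∈ F) :
    q - f ∈ tanCone Q F :=
  fun _ hC => hC.2 ⟨q, hq, f, hf, rfl⟩

theorem tanCone_subset {Q F C : Set V} (hC : IsConvexCone C)
    (h : ∀ q ∈ Q, ∀ f ∈ F, q - f ∈ C) : tanCone Q F ⊆ C := by
  intro x hx
  refine hx C ⟨hC, ?_⟩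
  rintro _ ⟨q, hq, f, hf, rfl⟩
  exact h q hq f hf

theorem isConvexCone_halfspace (y : V) : IsConvexCone {x : V | ⟪y, x⟫ ≤ 0} := by
  refine isConvexCone_of_add (by simp) ?_ ?_
  · intro x hx z hz
    simp only [Set.mem_ofPred_eq, inner_add_right] at *
    linarith
  · intro c hc x hx
    simp only [Set.mem_ofPred_eq, inner_smul_right] at *
    exact mul_nonpos_of_nonneg_of_nonpos hc hx

/-- If `y` exposes `F` and `F' ⊆ F`, then elements of `C_{F'}(Q)` orthogonal to `y` are lineality
directions of `C_F(Q)`. The vectors satisfying the conclusion form a convex cone, so it suffices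
to check the generators `q - f'`. -/
theorem tanCone_subset_neg_of_inner_eq_zero {Q F F' : Set V} {y : V}
    (hF : F = {x | x ∈ Q ∧ ∀ q ∈ Q, ⟪y, q⟫ ≤ ⟪y, x⟫}) (hsub : F' ⊆ F) :
    tanCone Q F' ⊆ {x | ⟪y, x⟫ ≤ 0 ∧ (⟪y, x⟫ = 0 → -x ∈ tanCone Q F)} := by
  have hA := isConvexCone_tanCone Q F
  refine tanCone_subset (isConvexCone_of_add ?_ ?_ ?_) ?_
  · simpa using hA.1
  · rintro x ⟨hx, hx'⟩ z ⟨hz, hz'⟩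
    simp only [Set.mem_ofPred_eq, inner_add_right]
    refine ⟨by linarith, fun h => ?_⟩
    rw [neg_add]
    exact hA.add_mem (hx' (by linarith)) (hz' (by linarith))
  · rintro c hc x ⟨hx, hx'⟩
    simp only [Set.mem_ofPred_eq, inner_smul_right]
    refine ⟨mul_nonpos_of_nonneg_of_nonpos hc hx, fun h => ?_⟩
    rcases mul_eq_zero.1 h with h | h
    · simpa [h] using hA.1
    · rw [← smul_neg]
      exact hA.2.2 c hc _ (hx' h)
  · intro q hq f hf
    have hf' := hsub hf
    rw [hF] at hf'
    simp only [Set.mem_ofPred_eq, inner_sub_right]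
    refine ⟨by linarith [hf'.2 q hq], fun h => ?_⟩
    rw [neg_sub]
    refine sub_mem_tanCone hf'.1 ?_
    rw [hF]
    exact ⟨hq, fun r hr => by linarith [hf'.2 r hr]⟩

theorem mem_lineal_of_transl_eq {A D : Set V} (hA : IsConvexCone A) (hD : IsConvexCone D)
    {v u : V} (h : transl v A = transl u D) : u - v ∈ lineal A := by
  have key : ∀ x, x - v ∈ A ↔ x - u ∈ D := fun x => by rw [← mem_transl, h, mem_transl]
  have h1 : u - v ∈ A := (key u).2 (by simpa using hD.1)
  refine ⟨h1, ?_⟩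
  have h2 : v - u ∈ D := (key v).1 (by simpa using hA.1)
  -- `2 • (v - u) ∈ D`, and `u + 2 • (v - u) = v - (u - v)`
  have h3 := (key (v - (u - v))).2 (by
    have := hD.add_mem h2 h2
    rwa [show v - u + (v - u) = v - (u - v) - u by abel] at this)
  rw [Set.mem_neg]
  rwa [show v - (u - v) - v = -(u - v) by abel] at h3

/-- a translated tangent cone `C_F(Q) + v` tightly contains the polyhedron
`C_{F'}(Q) + v'` if and only if it is an affine tangent cone of `C_{F'}(Q) + v'`. -/
theorem tight_containment_iff_affine_tangent_cone (Q : Set V) (hQ : IsPolyhedron Q)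
    (F F' : Set V) (hF : IsFace Q F) (hF' : IsFace Q F') (v v' : V) :
    TightContains (tanCone Q F) v (transl v' (tanCone Q F')) ↔
      ∃ (G : Set V) (u : V), IsFace (transl v' (tanCone Q F')) G ∧ u ∈ G ∧
        transl v (tanCone Q F) = transl u (tanCone (transl v' (tanCone Q F')) G) := by
  obtain ⟨y, -, hFy⟩ := hF
  have hF'Q : F' ⊆ Q := by
    obtain ⟨y', -, h⟩ := hF'
    rw [h]
    exact fun x hx => hx.1
  obtain ⟨-, ⟨f₁, hf₁⟩, -⟩ := hF'
  have hA := isConvexCone_tanCone Q F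
  have hB := isConvexCone_tanCone Q F'
  constructor
  · rintro ⟨hsub, p, hp, hpl⟩
    rw [mem_transl] at hp hpl
    have hvp : v - p ∈ tanCone Q F := by simpa using hpl.2
    have hBA' : ∀ x ∈ tanCone Q F', v' + x - v ∈ tanCone Q F := fun x hx =>
      mem_transl.1 (hsub ⟨x, hx, rfl⟩)
    -- `B + (p - v') ⊆ B` turns the inclusion of translates into one of cones
    have hBA : tanCone Q F' ⊆ tanCone Q F := by
      intro x hx
      have := hA.add_mem (hBA' _ (hB.add_mem hx hp)) hvp
      rwa [show v' + (x + (p - v')) - v + (v - p) = x by abel] at this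
    have hv1 : v' - v ∈ tanCone Q F := by simpa using hBA' 0 hB.1
    have hv2 : v - v' ∈ tanCone Q F := by
      have := hA.add_mem hvp (hBA hp)
      rwa [show v - p + (p - v') = v - v' by abel] at this
    have hAy : tanCone Q F ⊆ {x | ⟪y, x⟫ ≤ 0} := by
      refine tanCone_subset (isConvexCone_halfspace y) fun q hq f hf => ?_
      rw [hFy] at hf
      simp only [Set.mem_ofPred_eq, inner_sub_right]
      linarith [hf.2 q hq]
    have hyB : ∀ f ∈ F', ∀ q ∈ Q, ⟪y, q⟫ ≤ ⟪y, f⟫ := by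
      intro f hf q hq
      have := hAy (hBA (sub_mem_tanCone hq hf))
      simp only [Set.mem_ofPred_eq, inner_sub_right] at this
      linarith
    have hFF : F' ⊆ F := by
      intro f hf
      rw [hFy]
      exact ⟨hF'Q hf, hyB f hf⟩
    have hneg := tanCone_subset_neg_of_inner_eq_zero hFy hFF
    have hmem : ∀ x, v' + x ∈ transl v' (tanCone Q F') ↔ x ∈ tanCone Q F' := fun x => by
      rw [mem_transl, add_sub_cancel_left]
    set G : Set V := {x | x ∈ transl v' (tanCone Q F') ∧
      ∀ q ∈ transl v' (tanCone Q F'), ⟪y, q⟫ ≤ ⟪y, x⟫} with hG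
    have hGmem : ∀ x, v' + x ∈ G ↔ x ∈ tanCone Q F' ∧ ⟪y, x⟫ = 0 := by
      intro x
      rw [hG, Set.mem_ofPred_eq, hmem]
      refine and_congr_right fun hx => ⟨fun h => ?_, fun h => ?_⟩
      · have := h (v' + 0) ((hmem 0).2 hB.1)
        simp only [inner_add_right, inner_zero_right] at this
        linarith [(hneg hx).1]
      · rintro _ ⟨z, hz, rfl⟩
        simp only [inner_add_right]
        linarith [(hneg hz).1]
    have hvG : v' ∈ G := by simpa using (hGmem 0).2 ⟨hB.1, inner_zero_right y⟩
    have hcone : tanCone (transl v' (tanCone Q F')) G = tanCone Q F := by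
      apply Set.Subset.antisymm
      · refine tanCone_subset hA ?_
        rintro _ ⟨z, hz, rfl⟩ g hg
        obtain ⟨x, rfl⟩ : ∃ x, g = v' + x := ⟨g - v', by abel⟩
        obtain ⟨hx, hx0⟩ := (hGmem x).1 hg
        have := hA.add_mem (hBA hz) ((hneg hx).2 hx0)
        rwa [show z + -x = v' + z - (v' + x) by abel] at this
      · refine tanCone_subset (isConvexCone_tanCone _ _) fun q hq f hf => ?_
        rw [hFy] at hf
        have h1 := sub_mem_tanCone (F := G) ((hmem _).2 (sub_mem_tanCone hq hf₁))
          ((hGmem (f - f₁)).2 ⟨sub_mem_tanCone hf.1 hf₁, by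
            rw [inner_sub_right]
            linarith [hf.2 f₁ (hF'Q hf₁), hyB f₁ hf₁ f hf.1]⟩)
        rwa [show v' + (q - f₁) - (v' + (f - f₁)) = q - f by abel] at h1
    refine ⟨G, v', ⟨y, ⟨v', hvG⟩, hG⟩, hvG, ?_⟩
    rw [hcone]
    ext x
    rw [mem_transl, mem_transl]
    constructor
    · intro h
      simpa using hA.add_mem h hv2
    · intro h
      simpa using hA.add_mem h hv1
  · rintro ⟨G, u, ⟨z, -, hGz⟩, hu, h⟩
    have huP : u ∈ transl v' (tanCone Q F') := by
      rw [hGz] at hu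
      exact hu.1
    refine ⟨fun x hx => ?_, u, huP, ?_⟩
    · rw [h, mem_transl]
      exact sub_mem_tanCone hx hu
    · rw [mem_transl]
      exact mem_lineal_of_transl_eq hA (isConvexCone_tanCone _ _) h
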